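/- For the words s_k = (∏_{i=1}^{k-1} a^{N_i} b) a^{N_k} with N_i the value of the binary prefix w_k[1:k+i] of w_k = h(B[1:k]) (B a De Bruijn sequence of order ⌈log₂ k⌉ starting with 1, h(0)=01, h(1)=10), the start rule produced by RePair after k−1 rounds contains k pairwise non-overlapping factors v_1, …, v_k where v_i = f_{k−2}(w_k[i+2]) f_{k−3}(w_k[i+3]) ⋯ f_1(w_k[k+i−1]) f_0(w_k[k+i]), with f_0(1)=a, f_j(1)=X_j, f_j(0)=ε; each v_i has length ≥ (k−3)/2, no letter occurs twice in any v_i, and every word of length 2⌈log₂ k⌉ + 2 occurs at most once among the factors of the v_i's. -/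

import Mathlib

/-- Symbols appearing in RePair's grammars: nonterminals (numbered) or terminals. -/
abbrev RSym (α : Type) := ℕ ⊕ α

/-- A grammar in RePair's working representation: the list of right-hand sides, where the
rule at position `i` is the rule of nonterminal `i` and the start nonterminal is `0`. -/
abbrev Grammar (α : Type) := List (List (RSym α))

def countNOAux {σ : Type} [DecidableEq σ] (γ : List σ) : ℕ → List σ → ℕ
  | 0, _ => 0
  | fuel + 1, w =>
    if w = [] then 0
    else if γ <+: w then 1 + countNOAux γ fuel (w.drop γ.length)
    else countNOAux γ fuel w.tail

/-- The maximal number of pairwise non-overlapping occurrences of `γ` (with `|γ| ≥ 1`)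
in `w`, computed by the left-to-right greedy strategy. -/
def countNO {σ : Type} [DecidableEq σ] (γ w : List σ) : ℕ := countNOAux γ w.length w

def replaceNOAux {σ : Type} [DecidableEq σ] (γ : List σ) (X : σ) : ℕ → List σ → List σ
  | 0, w => w
  | _ + 1, [] => []
  | fuel + 1, s :: tl =>
    if γ <+: (s :: tl) then X :: replaceNOAux γ X fuel ((s :: tl).drop γ.length)
    else s :: replaceNOAux γ X fuel tl

/-- Replace the non-overlapping occurrences of `γ` in `w`, left to right, by `X`. -/
def replaceNO {σ : Type} [DecidableEq σ] (γ : List σ) (X : σ) (w : List σ) : List σ :=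
  replaceNOAux γ X w.length w

/-- The number of pairwise non-overlapping occurrences of `γ` in the right-hand sides. -/
def freq {α : Type} [DecidableEq α] (G : Grammar α) (γ : List (RSym α)) : ℕ :=
  (G.map (countNO γ)).sum

/-- `γ` is a maximal string of `G`: it has length at least two, occurs at least twice
without overlap, and no strictly longer word occurs at least as many times. -/
def IsMaxStr {α : Type} [DecidableEq α] (G : Grammar α) (γ : List (RSym α)) : Prop :=
  2 ≤ γ.length ∧ 2 ≤ freq G γ ∧ ∀ δ, γ.length < δ.length → freq G δ < freq G γ

/-- One round of RePair: pick a most frequent maximal string `γ`, replace its occurrences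
left to right by the fresh nonterminal `G.length`, and append the new rule `X → γ`. -/
def RePairStep {α : Type} [DecidableEq α] (G G' : Grammar α) : Prop :=
  ∃ γ, IsMaxStr G γ ∧ (∀ δ, IsMaxStr G δ → freq G δ ≤ freq G γ) ∧
    G' = (G.map (fun r => replaceNO γ (Sum.inl G.length) r)) ++ [γ]

/-- `RePairSteps r G G'`: `G'` is obtained from `G` by `r` rounds of RePair. -/
inductive RePairSteps {α : Type} [DecidableEq α] : ℕ → Grammar α → Grammar α → Prop
  | refl (G) : RePairSteps 0 G G
  | tail {n : ℕ} {G₁ G₂ G₃ : Grammar α} :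
      RePairSteps n G₁ G₂ → RePairStep G₂ G₃ → RePairSteps (n + 1) G₁ G₃

/-- The initial grammar `S → w`. -/
def RePairInit {α : Type} (w : List α) : Grammar α := [w.map Sum.inr]

/-- `G` is an output of RePair on input `w`: reachable from `S → w` by rounds of RePair,
with no maximal string left. -/
def RePairRun {α : Type} [DecidableEq α] (w : List α) (G : Grammar α) : Prop :=
  (∃ n, RePairSteps n (RePairInit w) G) ∧ ∀ γ, ¬ IsMaxStr G γ

/-- The size of a grammar: total length of all right-hand sides. -/
def gramSize {α : Type} (G : Grammar α) : ℕ := (G.map List.length).sum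

/-- The number of occurrences (starting positions) of `x` as a factor of `w`. -/
def countOcc {σ : Type} [DecidableEq σ] (x w : List σ) : ℕ :=
  ((List.range (w.length + 1)).filter (fun i => (w.drop i).take x.length = x)).length

/-- The homomorphism `h` with `h(0) = 01` and `h(1) = 10`, applied letter by letter
(`true` plays the role of `1`). -/
def hmap (u : List Bool) : List Bool :=
  u.flatMap (fun b => if b then [true, false] else [false, true])

/-- The value of a binary word (most significant bit first, `true` = 1). -/
def binVal (l : List Bool) : ℕ := l.foldl (fun acc b => 2 * acc + cond b 1 0) 0

/-- The word `a^{N 1} b a^{N 2} b ... b a^{N k}` over the alphabet `Fin 2`,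
with `a = 0` and `b = 1`. -/
def blockWord (N : ℕ → ℕ) (k : ℕ) : List (Fin 2) :=
  ((List.range (k - 1)).flatMap (fun j => List.replicate (N (j + 1)) 0 ++ [1])) ++
    List.replicate (N k) 0

/-!
Write `X_0 = a`. After `r` rounds of RePair every block `a ^ N` has become `X_r ^ ⌊N / 2 ^ r⌋`
followed by the letters `X_j` for the exponents `j < r` of the bits `1` of `N`. In this grammar
`X_r X_r` is strictly more frequent than every other word of length at least two, so the next round
is forced. After `k - 1` rounds the `i`-th block ends with the code `v_i` of the `k - 1` low bits of
`N_i`, which form a window of `w_k`. A factor of `v_i` determines a window of `w_k` at least as long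
as the factor, and windows of length `2 c` in `h(u)` are distinct once those of length `c` in `u`
are: windows starting at the same parity come from windows of `u`, and two equal windows starting
at different parities force a repetition in `u` as well.
-/

section Occurrences

variable {σ : Type}

theorem eq_of_nodup_of_prefix_drop {x w : List σ} (hw : w.Nodup) (hx : x ≠ []) {p q : ℕ}
    (hp : x <+: w.drop p) (hq : x <+: w.drop q) : p = q := by
  obtain ⟨c, y, rfl⟩ := List.exists_cons_of_ne_nil hx
  have getElem?_eq : ∀ {n}, c :: y <+: w.drop n → w[n]? = some c := by
    rintro n ⟨z, hz⟩
    rw [← add_zero n, ← List.getElem?_drop, ← hz]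
    rfl
  have hlen : p < w.length := (List.getElem?_eq_some_iff.1 (getElem?_eq hp)).1
  exact (List.getElem?_inj hlen hw).1 ((getElem?_eq hp).trans (getElem?_eq hq).symm)

variable [DecidableEq σ]

theorem countOcc_eq_card (x w : List σ) :
    countOcc x w = ((Finset.range (w.length + 1)).filter fun p => x <+: w.drop p).card := by
  simp only [List.prefix_iff_eq_take, eq_comm (a := x)]
  rfl

theorem countOcc_le_one_iff {x w : List σ} :
    countOcc x w ≤ 1 ↔ ∀ ⦃p q⦄, p ≤ w.length → q ≤ w.length →
      x <+: w.drop p → x <+: w.drop q → p = q := by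
  simp only [countOcc_eq_card, Finset.card_le_one, Finset.mem_filter, Finset.mem_range,
    Nat.lt_succ_iff]
  exact ⟨fun h p q hp hq hxp hxq => h p ⟨hp, hxp⟩ q ⟨hq, hxq⟩,
    fun h p hp q hq => h hp.1 hq.1 hp.2 hq.2⟩

theorem sum_countOcc_le_one {ι : Type*} {s : Finset ι} {v : ι → List σ} {x : List σ}
    (hs : ∀ i ∈ s, ∀ j ∈ s, ∀ p q, x <+: (v i).drop p → x <+: (v j).drop q → i = j ∧ p = q) :
    ∑ i ∈ s, countOcc x (v i) ≤ 1 := by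
  simp only [countOcc_eq_card]
  rw [← Finset.card_sigma, Finset.card_le_one]
  rintro ⟨i, p⟩ hip ⟨j, q⟩ hjq
  simp only [Finset.mem_sigma, Finset.mem_filter] at hip hjq
  obtain ⟨rfl, rfl⟩ := hs i hip.1 j hjq.1 p q hip.2.2 hjq.2.2
  rfl

end Occurrences

section DistinctFactors

variable {σ : Type}

/-- All factors of length `n` of the word `w` are distinct: two windows of length `n` that carry
the same letters start at the same position. -/
def FactorsDistinct (n : ℕ) (w : List σ) : Prop :=
  ∀ ⦃p q⦄, p + n ≤ w.length → q + n ≤ w.length → (∀ t < n, w[p + t]? = w[q + t]?) → p = q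

namespace FactorsDistinct

theorem of_countOcc_le_one [DecidableEq σ] {n : ℕ} {w : List σ}
    (hw : ∀ x : List σ, x.length = n → countOcc x w ≤ 1) : FactorsDistinct n w := by
  intro p q hp hq hpq
  have htake : (w.drop p).take n = (w.drop q).take n := by
    refine List.ext_getElem? fun t => ?_
    rcases lt_or_ge t n with ht | ht
    · simp [ht, hpq t ht]
    · simp [ht.not_gt]
  have hlen : ((w.drop p).take n).length = n := by
    rw [List.length_take, List.length_drop]
    omega
  exact countOcc_le_one_iff.1 (hw _ hlen) (by omega) (by omega) (List.take_prefix n _)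
    (htake ▸ List.take_prefix n _)

theorem take {n : ℕ} {w : List σ} (hw : FactorsDistinct n w) (k : ℕ) :
    FactorsDistinct n (w.take k) := by
  intro p q hp hq hpq
  rw [List.length_take] at hp hq
  refine hw (by omega) (by omega) fun t ht => ?_
  simpa [List.getElem?_take, show p + t < k by omega, show q + t < k by omega] using hpq t ht

theorem pos {n : ℕ} {w : List σ} (hw : FactorsDistinct n w) (hne : w ≠ []) : 0 < n := by
  have hlen := List.length_pos_iff.2 hne
  by_contra! hn
  exact zero_ne_one (hw (p := 0) (q := 1) (by omega) (by omega) (by omega))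

end FactorsDistinct

theorem hmap_cons (b : Bool) (u : List Bool) : hmap (b :: u) = b :: (!b) :: hmap u := by
  cases b <;> rfl

theorem head?_hmap (u : List Bool) : (hmap u).head? = u.head? := by
  cases u with
  | nil => rfl
  | cons b u => rw [hmap_cons, List.head?_cons, List.head?_cons]

theorem length_hmap (u : List Bool) : (hmap u).length = 2 * u.length := by
  induction u with
  | nil => rfl
  | cons b u ih => simp only [hmap_cons, List.length_cons, ih]; ring

theorem getElem?_hmap_two_mul (u : List Bool) (t : ℕ) : (hmap u)[2 * t]? = u[t]? := by
  induction u generalizing t with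
  | nil => rfl
  | cons b u ih => cases t <;> simp [hmap_cons, mul_add, ih]

theorem getElem?_hmap_two_mul_add_one (u : List Bool) (t : ℕ) :
    (hmap u)[2 * t + 1]? = u[t]?.map not := by
  induction u generalizing t with
  | nil => rfl
  | cons b u ih => cases t <;> simp [hmap_cons, mul_add, ih]

-- An even and an odd window that agree force `u[b + t] = u[b + 1 + t]` for all `t < n`.
theorem not_hmap_window_eq_of_even_odd {n : ℕ} {u : List Bool} (hu : FactorsDistinct n u)
    {a b : ℕ} (hb : b + 1 + n ≤ u.length) :
    ¬ ∀ t < 2 * n, (hmap u)[2 * a + t]? = (hmap u)[2 * b + 1 + t]? := by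
  intro hab
  refine absurd (hu (p := b) (q := b + 1) (by omega) hb fun t ht => ?_) (by omega)
  have heven := hab (2 * t) (by omega)
  have hodd := hab (2 * t + 1) (by omega)
  rw [show 2 * a + 2 * t = 2 * (a + t) by ring, show 2 * b + 1 + 2 * t = 2 * (b + t) + 1 by ring,
    getElem?_hmap_two_mul, getElem?_hmap_two_mul_add_one] at heven
  rw [show 2 * a + (2 * t + 1) = 2 * (a + t) + 1 by ring,
    show 2 * b + 1 + (2 * t + 1) = 2 * (b + 1 + t) by ring, getElem?_hmap_two_mul,
    getElem?_hmap_two_mul_add_one, heven, Option.map_map] at hodd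
  simpa [Function.comp_def] using hodd

theorem FactorsDistinct.hmap {n : ℕ} {u : List Bool} (hu : FactorsDistinct n u) :
    FactorsDistinct (2 * n) (hmap u) := by
  intro p q hp hq hpq
  rw [length_hmap] at hp hq
  rcases Nat.even_or_odd' p with ⟨a, rfl | rfl⟩ <;> rcases Nat.even_or_odd' q with ⟨b, rfl | rfl⟩
  · have hab : a = b := hu (by omega) (by omega) fun t ht => by
      simpa only [← mul_add, getElem?_hmap_two_mul] using hpq (2 * t) (by omega)
    rw [hab]
  · exact absurd hpq (not_hmap_window_eq_of_even_odd hu (by omega))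
  · exact absurd (fun t ht => (hpq t ht).symm) (not_hmap_window_eq_of_even_odd hu (by omega))
  · have hab : a = b := hu (by omega) (by omega) fun t ht => by
      have hodd := hpq (2 * t) (by omega)
      rw [add_right_comm, add_right_comm (2 * b), ← mul_add, ← mul_add,
        getElem?_hmap_two_mul_add_one, getElem?_hmap_two_mul_add_one] at hodd
      exact Option.map_injective Bool.not_injective hodd
    rw [hab]

theorem count_true_take_hmap (u : List Bool) {n : ℕ} (hn : n ≤ 2 * u.length) :
    n ≤ 2 * ((hmap u).take n).count true + 1 ∧ 2 * ((hmap u).take n).count true ≤ n + 1 := by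
  induction u generalizing n with
  | nil => simp_all [hmap]
  | cons b u ih =>
    rcases n with _ | _ | n
    · simp
    · cases b <;> simp [hmap_cons]
    · rw [List.length_cons] at hn
      have := ih (n := n) (by omega)
      cases b <;> simp only [hmap_cons, List.take_succ_cons, List.count_cons] <;> simp <;> omega

theorem le_two_mul_count_true_hmap_window (u : List Bool) {p m : ℕ} (h : p + m ≤ 2 * u.length) :
    m ≤ 2 * (((hmap u).drop p).take m).count true + 2 := by
  have hsplit : (hmap u).take (p + m) = (hmap u).take p ++ ((hmap u).drop p).take m :=
    List.take_add
  have hcount := congrArg (List.count true) hsplit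
  rw [List.count_append] at hcount
  have hlong := (count_true_take_hmap u h).1
  have hshort := (count_true_take_hmap u (n := p) (by omega)).2
  omega

end DistinctFactors

section BitWords

/-- The exponents of the powers of two occurring in the binary word `u` (most significant bit
first), in decreasing order. -/
def oneExponents : List Bool → List ℕ
  | [] => []
  | b :: u => (if b then [u.length] else []) ++ oneExponents u

theorem length_oneExponents (u : List Bool) : (oneExponents u).length = u.count true := by
  induction u with
  | nil => rfl
  | cons b u ih => cases b <;> simp [oneExponents, ih]

theorem mem_oneExponents {u : List Bool} {t : ℕ} :
    t ∈ oneExponents u ↔ u.reverse[t]? = some true := by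
  induction u with
  | nil => simp [oneExponents]
  | cons b u ih =>
    rw [oneExponents, List.mem_append, ih, List.reverse_cons]
    rcases lt_trichotomy t u.length with ht | rfl | ht
    · have hne : t ≠ u.length := ht.ne
      cases b <;> simp [List.getElem?_append, ht, hne]
    · cases b <;> simp
    · have hne : t ≠ u.length := ht.ne'
      have hnone : [b][t - u.length]? = none := List.getElem?_eq_none (by simp; omega)
      cases b <;> simp [List.getElem?_append, ht.not_gt, hne, hnone]

theorem lt_length_of_mem_oneExponents {u : List Bool} {t : ℕ} (ht : t ∈ oneExponents u) :
    t < u.length := by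
  simpa using (List.getElem?_eq_some_iff.1 (mem_oneExponents.1 ht)).1

theorem pairwise_oneExponents (u : List Bool) : (oneExponents u).Pairwise (· > ·) := by
  induction u with
  | nil => exact List.Pairwise.nil
  | cons b u ih =>
    cases b
    · exact ih
    · exact List.pairwise_cons.2 ⟨fun t => lt_length_of_mem_oneExponents, ih⟩

theorem mem_of_isInfix_of_pairwise_gt {α : Type*} [Preorder α] {l y : List α}
    (hl : l.Pairwise (· > ·)) (hy : y <:+: l) {a b t : α} (ha : a ∈ y) (hb : b ∈ y) (hat : a ≤ t)
    (htb : t ≤ b) (ht : t ∈ l) : t ∈ y := by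
  obtain ⟨l₁, l₂, rfl⟩ := hy
  rw [List.pairwise_append, List.pairwise_append] at hl
  obtain ⟨⟨-, -, hgt_left⟩, -, hgt_right⟩ := hl
  rw [List.mem_append, List.mem_append] at ht
  rcases ht with (ht | ht) | ht
  · exact absurd (hgt_left t ht b hb) htb.not_gt
  · exact ht
  · exact absurd (hgt_right a (List.mem_append_right l₁ ha) t ht) hat.not_gt

theorem exists_mem_add_le_mem_of_pairwise_gt {y : List ℕ} (hy : y.Pairwise (· > ·)) {m : ℕ}
    (hm : y.length = m + 1) : ∃ a ∈ y, ∃ b ∈ y, a + m ≤ b := by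
  induction y generalizing m with
  | nil => simp at hm
  | cons c y ih =>
    rcases m with _ | m
    · exact ⟨c, List.mem_cons_self, c, List.mem_cons_self, le_rfl⟩
    · obtain ⟨hc, hy⟩ := List.pairwise_cons.1 hy
      obtain ⟨a, ha, b, hb, hab⟩ := ih hy (Nat.succ_injective hm)
      have hbc : c > b := hc b hb
      exact ⟨a, List.mem_cons_of_mem c ha, c, List.mem_cons_self, by omega⟩

/-- The symbol that stands for `a ^ 2 ^ j` in the grammar: `X_j`, with `X_0 = a`. -/
def powSym {α : Type} (a : α) (j : ℕ) : RSym α := if j = 0 then Sum.inr a else Sum.inl j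

theorem powSym_injective {α : Type} (a : α) : Function.Injective (powSym a) := by
  intro i j hij
  unfold powSym at hij
  split_ifs at hij <;> simp_all

theorem powSym_ne_inr {α : Type} {a b : α} (hab : a ≠ b) (j : ℕ) : powSym a j ≠ Sum.inr b := by
  unfold powSym
  split_ifs <;> simp [hab]

/-- The word encoding the binary word `u`: each bit `1` at exponent `j` becomes `X_j`, each bit `0`
the empty word. -/
def bitWord {α : Type} (a : α) (u : List Bool) : List (RSym α) := (oneExponents u).map (powSym a)

theorem bitWord_cons {α : Type} (a : α) (b : Bool) (u : List Bool) :
    bitWord a (b :: u) = (if b then [powSym a u.length] else []) ++ bitWord a u := by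
  cases b <;> rfl

theorem length_bitWord {α : Type} (a : α) (u : List Bool) :
    (bitWord a u).length = u.count true := by
  rw [bitWord, List.length_map, length_oneExponents]

theorem nodup_bitWord {α : Type} (a : α) (u : List Bool) : (bitWord a u).Nodup :=
  List.Nodup.map (powSym_injective a) ((pairwise_oneExponents u).imp fun h => ne_of_gt h)

theorem bitWord_eq_flatMap {α : Type} (a : α) (u : List Bool) :
    bitWord a u = (List.range u.length).flatMap fun j =>
      if u.getD j false then [powSym a (u.length - 1 - j)] else [] := by
  induction u with
  | nil => rfl
  | cons b u ih =>
    rw [bitWord_cons, ih, List.length_cons, List.range_succ_eq_map, List.flatMap_cons,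
      List.flatMap_map]
    simp [Nat.sub_sub, Nat.add_comm]

-- A factor of a decreasing list is order-convex in it, so between its last and its first exponent
-- a factor of `bitWord a u` records every bit of `u`.
theorem exists_window_eq_of_common_factor {α : Type} {a : α} {u u' : List Bool} {x : List (RSym α)}
    {m : ℕ} (hx : x <:+: bitWord a u) (hx' : x <:+: bitWord a u') (hm : x.length = m + 1) :
    ∃ s, s + m < u.length ∧ s + m < u'.length ∧
      ∀ t ≤ m, u.reverse[s + t]? = u'.reverse[s + t]? := by
  obtain ⟨y, hy, rfl⟩ := List.infix_map_iff.1 hx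
  obtain ⟨y', hy', hyy'⟩ := List.infix_map_iff.1 hx'
  obtain rfl := List.map_injective_iff.2 (powSym_injective a) hyy'
  rw [List.length_map] at hm
  obtain ⟨s, hs, e, he, hse⟩ :=
    exists_mem_add_le_mem_of_pairwise_gt ((pairwise_oneExponents u).sublist hy.sublist) hm
  have hu := lt_length_of_mem_oneExponents (hy.subset he)
  have hu' := lt_length_of_mem_oneExponents (hy'.subset he)
  refine ⟨s, by omega, by omega, fun t ht => ?_⟩
  have mem_iff : ∀ {v}, y <:+: oneExponents v → (s + t ∈ y ↔ v.reverse[s + t]? = some true) :=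
    fun {v} hv => Iff.trans ⟨fun h => hv.subset h, mem_of_isInfix_of_pairwise_gt
      (pairwise_oneExponents v) hv hs he (by omega) (by omega)⟩ mem_oneExponents
  have htrue := (mem_iff hy).symm.trans (mem_iff hy')
  rw [List.getElem?_eq_getElem (by rw [List.length_reverse]; omega),
    List.getElem?_eq_getElem (by rw [List.length_reverse]; omega)] at htrue ⊢
  simpa only [Option.some_inj, ← Bool.eq_iff_iff] using htrue

theorem eq_of_common_factor_bitWord {α : Type} {a : α} {w : List Bool} {n r i j : ℕ}
    (hw : FactorsDistinct n w) (hi : i + r ≤ w.length) (hj : j + r ≤ w.length)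
    {x : List (RSym α)} (hne : x ≠ []) (hn : n ≤ x.length)
    (hxi : x <:+: bitWord a ((w.drop i).take r)) (hxj : x <:+: bitWord a ((w.drop j).take r)) :
    i = j := by
  obtain ⟨m, hm⟩ := Nat.exists_eq_succ_of_ne_zero (List.length_pos_iff.2 hne).ne'
  obtain ⟨s, hs, -, hst⟩ := exists_window_eq_of_common_factor hxi hxj hm
  rw [List.length_take, List.length_drop] at hs
  have getElem?_reverse : ∀ {p t}, p + r ≤ w.length → t ≤ m →
      ((w.drop p).take r).reverse[s + (m - t)]? = w[p + (r - 1 - s - m) + t]? := by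
    intro p t hp ht
    have hlen : ((w.drop p).take r).length = r := by
      rw [List.length_take, List.length_drop]
      omega
    rw [List.getElem?_reverse (by omega), hlen, List.getElem?_take, if_pos (by omega),
      List.getElem?_drop]
    congr 1
    omega
  have hij : i + (r - 1 - s - m) = j + (r - 1 - s - m) :=
    hw (by omega) (by omega) fun t ht => by
      rw [← getElem?_reverse hi (by omega), ← getElem?_reverse hj (by omega)]
      exact hst (m - t) (by omega)
  exact Nat.add_right_cancel hij

/-- The word `v_i = f_{k-2}(w[i+2]) ⋯ f_0(w[k+i])` of the paper (whose indices start at `1`), over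
the terminal `a = 0`. -/
def factorWord (w : List Bool) (k i : ℕ) : List (RSym (Fin 2)) :=
  (List.range (k - 1)).flatMap fun j =>
    if w.getD (i + 1 + j) false then
      [if k - 2 - j = 0 then (Sum.inr 0 : RSym (Fin 2)) else Sum.inl (k - 2 - j)]
    else []

theorem factorWord_eq_bitWord {w : List Bool} {k i : ℕ} (h : k + i ≤ w.length) :
    factorWord w k i = bitWord 0 ((w.drop (i + 1)).take (k - 1)) := by
  have hlen : ((w.drop (i + 1)).take (k - 1)).length = k - 1 := by
    rw [List.length_take, List.length_drop]
    omega
  rw [bitWord_eq_flatMap, hlen]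
  refine List.flatMap_congr fun j hj => ?_
  have hj : j < k - 1 := List.mem_range.1 hj
  simp [List.getD_eq_getElem?_getD, hj, powSym, Nat.sub_sub]

end BitWords

section Greedy

variable {σ : Type}

theorem prefix_append_cons_iff {γ u t : List σ} {s : σ} (hs : s ∉ γ) :
    γ <+: u ++ s :: t ↔ γ <+: u := by
  induction u generalizing γ with
  | nil =>
    rcases γ with _ | ⟨d, γ⟩
    · simp
    · simp [List.cons_prefix_cons, (List.ne_of_not_mem_cons hs).symm]
  | cons c u ih =>
    rcases γ with _ | ⟨d, γ⟩
    · simp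
    · rw [List.cons_append, List.cons_prefix_cons, List.cons_prefix_cons,
        ih (List.not_mem_of_not_mem_cons hs)]

variable {γ : List σ}

theorem greedy_induction (hγ : γ ≠ []) {P : List σ → Prop} (nil : P [])
    (append : ∀ t, P t → P (γ ++ t)) (cons : ∀ s t, ¬ γ <+: s :: t → P t → P (s :: t))
    (w : List σ) : P w := by
  induction hn : w.length using Nat.strong_induction_on generalizing w with
  | _ n ih =>
    subst hn
    by_cases hw : γ <+: w
    · obtain ⟨t, rfl⟩ := hw
      exact append t (ih _ (by simpa using List.length_pos_iff.2 hγ) t rfl)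
    · cases w with
      | nil => exact nil
      | cons s t => exact cons s t hw (ih _ (by simp) t rfl)

variable [DecidableEq σ]

theorem countNOAux_congr (hγ : γ ≠ []) {n m : ℕ} {w : List σ} (hn : w.length ≤ n)
    (hm : w.length ≤ m) : countNOAux γ n w = countNOAux γ m w := by
  induction n generalizing m w with
  | zero =>
    obtain rfl := List.length_eq_zero_iff.1 (Nat.le_zero.1 hn)
    cases m <;> simp [countNOAux]
  | succ n ih =>
    rcases w with _ | ⟨s, t⟩
    · cases m <;> simp [countNOAux]
    · obtain ⟨m, rfl⟩ := Nat.exists_eq_succ_of_ne_zero (n := m) (by rintro rfl; simp at hm)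
      have ht : t.length ≤ n ∧ t.length ≤ m :=
        ⟨Nat.le_of_succ_le_succ hn, Nat.le_of_succ_le_succ hm⟩
      have hdrop : ((s :: t).drop γ.length).length ≤ t.length := by
        have := List.length_pos_iff.2 hγ
        rw [List.length_drop, List.length_cons]
        omega
      simp only [countNOAux, List.tail_cons]
      rw [ih ht.1 ht.2, ih (hdrop.trans ht.1) (hdrop.trans ht.2)]

theorem replaceNOAux_congr (hγ : γ ≠ []) (Y : σ) {n m : ℕ} {w : List σ} (hn : w.length ≤ n)
    (hm : w.length ≤ m) : replaceNOAux γ Y n w = replaceNOAux γ Y m w := by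
  induction n generalizing m w with
  | zero =>
    obtain rfl := List.length_eq_zero_iff.1 (Nat.le_zero.1 hn)
    cases m <;> rfl
  | succ n ih =>
    rcases w with _ | ⟨s, t⟩
    · cases m <;> rfl
    · obtain ⟨m, rfl⟩ := Nat.exists_eq_succ_of_ne_zero (n := m) (by rintro rfl; simp at hm)
      have ht : t.length ≤ n ∧ t.length ≤ m :=
        ⟨Nat.le_of_succ_le_succ hn, Nat.le_of_succ_le_succ hm⟩
      have hdrop : ((s :: t).drop γ.length).length ≤ t.length := by
        have := List.length_pos_iff.2 hγ
        rw [List.length_drop, List.length_cons]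
        omega
      simp only [replaceNOAux]
      rw [ih ht.1 ht.2, ih (hdrop.trans ht.1) (hdrop.trans ht.2)]

theorem countNO_append_left (hγ : γ ≠ []) (t : List σ) :
    countNO γ (γ ++ t) = countNO γ t + 1 := by
  obtain ⟨c, y, rfl⟩ := List.exists_cons_of_ne_nil hγ
  rw [countNO, List.cons_append, List.length_cons, countNOAux, if_neg (List.cons_ne_nil _ _),
    ← List.cons_append, if_pos (List.prefix_append _ _), List.drop_left, add_comm,
    countNOAux_congr hγ (by simp) le_rfl, countNO]

theorem countNO_cons_of_not_isPrefix {s : σ} {t : List σ} (h : ¬ γ <+: s :: t) :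
    countNO γ (s :: t) = countNO γ t := by
  rw [countNO, List.length_cons, countNOAux, if_neg (List.cons_ne_nil _ _), if_neg h,
    List.tail_cons, countNO]

theorem replaceNO_append_left (hγ : γ ≠ []) (Y : σ) (t : List σ) :
    replaceNO γ Y (γ ++ t) = Y :: replaceNO γ Y t := by
  obtain ⟨c, y, rfl⟩ := List.exists_cons_of_ne_nil hγ
  rw [replaceNO, List.cons_append, List.length_cons, replaceNOAux, ← List.cons_append,
    if_pos (List.prefix_append _ _), List.drop_left, replaceNOAux_congr hγ Y (by simp) le_rfl,
    replaceNO]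

theorem replaceNO_cons_of_not_isPrefix (Y : σ) {s : σ} {t : List σ}
    (h : ¬ γ <+: s :: t) : replaceNO γ Y (s :: t) = s :: replaceNO γ Y t := by
  rw [replaceNO, List.length_cons, replaceNOAux, if_neg h, replaceNO]

theorem countNO_eq_zero_of_not_isInfix {w : List σ} (h : ¬ γ <:+: w) : countNO γ w = 0 := by
  induction w with
  | nil => rfl
  | cons s t ih =>
    rw [countNO_cons_of_not_isPrefix fun hp => h hp.isInfix,
      ih fun hi => h (hi.trans (List.suffix_cons s t).isInfix)]

theorem replaceNO_eq_self_of_not_isInfix {w : List σ} (h : ¬ γ <:+: w) (Y : σ) :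
    replaceNO γ Y w = w := by
  induction w with
  | nil => rfl
  | cons s t ih =>
    rw [replaceNO_cons_of_not_isPrefix Y fun hp => h hp.isInfix,
      ih fun hi => h (hi.trans (List.suffix_cons s t).isInfix)]

theorem countNO_mul_countP_le (hγ : γ ≠ []) (p : σ → Bool) (w : List σ) :
    countNO γ w * γ.countP p ≤ w.countP p := by
  induction w using greedy_induction hγ with
  | nil => exact (zero_mul _).le
  | append t ih => rw [countNO_append_left hγ, add_one_mul, List.countP_append]; omega
  | cons s t h ih =>
    rw [countNO_cons_of_not_isPrefix h]
    exact ih.trans (List.sublist_cons_self s t).countP_le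

theorem countNO_append_cons (hγ : γ ≠ []) {s : σ} (hs : s ∉ γ) (u t : List σ) :
    countNO γ (u ++ s :: t) = countNO γ u + countNO γ t := by
  induction u using greedy_induction hγ with
  | nil =>
    have h : ¬ γ <+: s :: t := by
      rw [← List.nil_append (s :: t), prefix_append_cons_iff hs, List.prefix_nil]
      exact hγ
    rw [List.nil_append, countNO_cons_of_not_isPrefix h]
    exact (zero_add _).symm
  | append u ih =>
    rw [List.append_assoc, countNO_append_left hγ, countNO_append_left hγ, ih, add_right_comm]
  | cons c u h ih =>
    rw [← prefix_append_cons_iff (t := t) hs, List.cons_append] at h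
    rw [List.cons_append, countNO_cons_of_not_isPrefix h, ih, countNO_cons_of_not_isPrefix]
    rwa [← prefix_append_cons_iff (t := t) hs]

theorem replaceNO_append_cons (hγ : γ ≠ []) (Y : σ) {s : σ} (hs : s ∉ γ) (u t : List σ) :
    replaceNO γ Y (u ++ s :: t) = replaceNO γ Y u ++ s :: replaceNO γ Y t := by
  induction u using greedy_induction hγ with
  | nil =>
    have h : ¬ γ <+: s :: t := by
      rw [← List.nil_append (s :: t), prefix_append_cons_iff hs, List.prefix_nil]
      exact hγ
    rw [List.nil_append, replaceNO_cons_of_not_isPrefix Y h]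
    rfl
  | append u ih =>
    rw [List.append_assoc, replaceNO_append_left hγ, replaceNO_append_left hγ, ih, List.cons_append]
  | cons c u h ih =>
    have h' := h
    rw [← prefix_append_cons_iff (t := t) hs, List.cons_append] at h'
    rw [List.cons_append, replaceNO_cons_of_not_isPrefix Y h', ih,
      replaceNO_cons_of_not_isPrefix Y h, List.cons_append]

theorem countNO_intercalate_singleton (hγ : γ ≠ []) {s : σ} (hs : s ∉ γ) (L : List (List σ)) :
    countNO γ ([s].intercalate L) = (L.map (countNO γ)).sum := by
  induction L with
  | nil => rfl
  | cons u L ih =>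
    rcases L with _ | ⟨t, L⟩
    · simp
    · rw [List.intercalate_cons_cons, List.append_assoc, List.singleton_append,
        countNO_append_cons hγ hs, ih, List.map_cons (l := t :: L), List.sum_cons]

theorem replaceNO_intercalate_singleton (hγ : γ ≠ []) (Y : σ) {s : σ} (hs : s ∉ γ)
    (L : List (List σ)) :
    replaceNO γ Y ([s].intercalate L) = [s].intercalate (L.map (replaceNO γ Y)) := by
  induction L with
  | nil => rfl
  | cons u L ih =>
    rcases L with _ | ⟨t, L⟩
    · simp
    · rw [List.intercalate_cons_cons, List.append_assoc, List.singleton_append,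
        replaceNO_append_cons hγ Y hs, ih]
      simp only [List.map_cons]
      rw [List.intercalate_cons_cons, List.append_assoc, List.singleton_append]

end Greedy

section PairPowers

variable {σ : Type} {X : σ}

theorem not_pair_isInfix_cons_of_notMem {v : List σ} (hv : X ∉ v) (s : σ) :
    ¬ [X, X] <:+: s :: v := by
  rw [List.infix_cons_iff]
  rintro (⟨t, ht⟩ | h)
  · obtain ⟨-, rfl⟩ := List.cons.inj ht
    exact hv List.mem_cons_self
  · exact hv (h.subset List.mem_cons_self)

variable [DecidableEq σ]

theorem countNO_pair_replicate_append {v : List σ} (hv : X ∉ v) (q : ℕ) :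
    countNO [X, X] (List.replicate q X ++ v) = q / 2 := by
  induction q using Nat.twoStepInduction with
  | zero => exact countNO_eq_zero_of_not_isInfix fun h => hv (h.subset List.mem_cons_self)
  | one => exact countNO_eq_zero_of_not_isInfix (not_pair_isInfix_cons_of_notMem hv X)
  | more q ih =>
    rw [show List.replicate (q + 2) X ++ v = [X, X] ++ (List.replicate q X ++ v) from rfl,
      countNO_append_left (List.cons_ne_nil X _), ih, Nat.add_div_right q two_pos]

theorem replaceNO_pair_replicate_append (Y : σ) {v : List σ} (hv : X ∉ v) (q : ℕ) :
    replaceNO [X, X] Y (List.replicate q X ++ v) =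
      List.replicate (q / 2) Y ++ List.replicate (q % 2) X ++ v := by
  induction q using Nat.twoStepInduction with
  | zero => exact replaceNO_eq_self_of_not_isInfix (fun h => hv (h.subset List.mem_cons_self)) Y
  | one => exact replaceNO_eq_self_of_not_isInfix (not_pair_isInfix_cons_of_notMem hv X) Y
  | more q ih =>
    rw [show List.replicate (q + 2) X ++ v = [X, X] ++ (List.replicate q X ++ v) from rfl,
      replaceNO_append_left (List.cons_ne_nil X _), ih, Nat.add_mod_right,
      Nat.add_div_right q two_pos]
    rfl

end PairPowers

section Blocks

theorem binVal_concat (l : List Bool) (d : Bool) : binVal (l ++ [d]) = 2 * binVal l + d.toNat := by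
  rw [binVal, List.foldl_append]
  rfl

theorem two_pow_length_le_binVal_cons_true (l : List Bool) :
    2 ^ l.length ≤ binVal (true :: l) := by
  induction l using List.reverseRecOn with
  | nil => exact le_rfl
  | append_singleton l d ih =>
    rw [← List.cons_append, binVal_concat, List.length_append, List.length_singleton, pow_succ]
    omega

theorem four_le_binVal_rdrop {l : List Bool} {r : ℕ} (hl : l.head? = some true)
    (hr : r + 3 ≤ l.length) : 4 ≤ binVal (l.rdrop r) := by
  obtain ⟨t, rfl⟩ := List.head?_eq_some_iff.1 hl
  rw [List.length_cons] at hr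
  have hdrop : (true :: t).rdrop r = true :: t.take (t.length - r) := by
    rw [List.rdrop, List.length_cons, show t.length + 1 - r = t.length - r + 1 by omega,
      List.take_succ_cons]
  rw [hdrop]
  calc 2 ^ 2 ≤ 2 ^ (t.take (t.length - r)).length :=
        Nat.pow_le_pow_right two_pos (by rw [List.length_take]; omega)
    _ ≤ binVal (true :: t.take (t.length - r)) := two_pow_length_le_binVal_cons_true _

theorem exists_rdrop_eq_concat_rtake_eq_cons {β : Type*} {l : List β} {r : ℕ} (hr : r < l.length) :
    ∃ d, l.rdrop r = l.rdrop (r + 1) ++ [d] ∧ l.rtake (r + 1) = d :: l.rtake r := by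
  have hlt : l.length - (r + 1) < l.length := by omega
  have hsucc : l.length - r = l.length - (r + 1) + 1 := by omega
  refine ⟨l[l.length - (r + 1)], ?_, ?_⟩
  · rw [List.rdrop, List.rdrop, hsucc, List.take_succ_eq_append_getElem hlt]
  · rw [List.rtake, List.rtake, hsucc, List.drop_eq_getElem_cons hlt]

theorem powSym_notMem_bitWord {α : Type} (a : α) {r : ℕ} {u : List Bool} (hu : u.length ≤ r) :
    powSym a r ∉ bitWord a u := by
  rw [bitWord, List.mem_map_of_injective (powSym_injective a)]
  exact fun h => (lt_length_of_mem_oneExponents h).not_ge hu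

/-- The code of the block `a ^ binVal l` after `r` rounds of RePair: the `r` least significant bits
of `l` have been split off the power of `X_r`. -/
def blockCode {α : Type} (a : α) (r : ℕ) (l : List Bool) : List (RSym α) :=
  List.replicate (binVal (l.rdrop r)) (powSym a r) ++ bitWord a (l.rtake r)

theorem powSym_notMem_bitWord_rtake {α : Type} (a : α) (r : ℕ) (l : List Bool) :
    powSym a r ∉ bitWord a (l.rtake r) :=
  powSym_notMem_bitWord a (by rw [List.rtake, List.length_drop]; omega)

theorem replaceNO_blockCode {α : Type} [DecidableEq α] (a : α) {r : ℕ} {l : List Bool}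
    (hr : r < l.length) :
    replaceNO [powSym a r, powSym a r] (powSym a (r + 1)) (blockCode a r l) =
      blockCode a (r + 1) l := by
  obtain ⟨d, hdrop, htake⟩ := exists_rdrop_eq_concat_rtake_eq_cons hr
  have hlen : (l.rtake r).length = r := by
    rw [List.rtake, List.length_drop]
    omega
  have hdiv : binVal (l.rdrop r) / 2 = binVal (l.rdrop (r + 1)) := by
    have := d.toNat_lt
    rw [hdrop, binVal_concat]
    omega
  have hmod : binVal (l.rdrop r) % 2 = d.toNat := by
    have := d.toNat_lt
    rw [hdrop, binVal_concat]
    omega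
  rw [blockCode, replaceNO_pair_replicate_append _ (powSym_notMem_bitWord_rtake a r l), hdiv, hmod,
    blockCode, htake, bitWord_cons, hlen, List.append_assoc]
  cases d <;> rfl

end Blocks

section Frequencies

theorem countP_eq_le_one_of_nodup {σ : Type*} [DecidableEq σ] {l : List σ} (hl : l.Nodup) (c : σ) :
    l.countP (fun d => d = c) ≤ 1 :=
  List.nodup_iff_count_le_one.1 hl c

theorem countP_intercalate_singleton_le {σ : Type*} (p : σ → Bool) (s : σ) (L : List (List σ)) :
    ([s].intercalate L).countP p ≤ (L.map fun w => (w ++ [s]).countP p).sum := by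
  induction L with
  | nil => exact le_rfl
  | cons u L ih =>
    rcases L with _ | ⟨t, L⟩
    · simp
    · rw [List.intercalate_cons_cons, List.countP_append, List.map_cons (l := t :: L),
        List.sum_cons]
      omega

theorem countP_flatten_map_pair {ι σ : Type*} (p : σ → Bool) (f : ι → σ) (l : List ι) :
    (l.map fun j => [f j, f j]).flatten.countP p = 2 * (l.map f).countP p := by
  induction l with
  | nil => rfl
  | cons j l ih =>
    cases hp : p (f j) <;> simp only [List.map_cons, List.flatten_cons, List.countP_append,
      List.countP_cons, List.countP_nil, hp, ih] <;> grind

variable {α : Type} [DecidableEq α]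

theorem freq_mul_countP_le {γ : List (RSym α)} (hγ : γ ≠ []) (p : RSym α → Bool) (G : Grammar α) :
    freq G γ * γ.countP p ≤ G.flatten.countP p := by
  induction G with
  | nil => exact (zero_mul _).le
  | cons w G ih =>
    rw [freq, List.map_cons, List.sum_cons, add_mul, List.flatten_cons, List.countP_append]
    exact add_le_add (countNO_mul_countP_le hγ p w) ih

theorem RePairStep.eq_of_forall_freq_lt {G G' : Grammar α} (h : RePairStep G G')
    {γ : List (RSym α)} (hlen : γ.length = 2) (hfreq : 2 ≤ freq G γ)
    (hlt : ∀ δ : List (RSym α), 2 ≤ δ.length → δ ≠ γ → freq G δ < freq G γ) :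
    G' = G.map (replaceNO γ (Sum.inl G.length)) ++ [γ] := by
  obtain ⟨δ, hδ, hδmax, rfl⟩ := h
  have hγ : IsMaxStr G γ :=
    ⟨hlen.ge, hfreq, fun ε hε => hlt ε (hlen ▸ hε.le) fun heq => hε.ne (heq ▸ rfl)⟩
  obtain rfl : δ = γ := by_contra fun hne => (hδmax γ hγ).not_gt (hlt δ hδ.1 hne)
  rfl

end Frequencies

section Rounds

variable {α : Type} (a b : α) (r : ℕ) (W : List (List Bool))

/-- The start rule after `r` rounds of RePair on the word whose blocks `a ^ binVal l`, for `l` in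
`W`, are separated by the letter `b`. -/
def startRule : List (RSym α) := [Sum.inr b].intercalate (W.map (blockCode a r))

/-- The grammar after `r` rounds of RePair: the start rule and the rules `X_{j+1} → X_j X_j`. -/
def roundGrammar : Grammar α :=
  startRule a b r W :: (List.range r).map fun j => [powSym a j, powSym a j]

variable {a b r W}

variable [DecidableEq α]

theorem map_replaceNO_roundGrammar (hab : a ≠ b) (hW : ∀ l ∈ W, r < l.length) :
    (roundGrammar a b r W).map (replaceNO [powSym a r, powSym a r] (powSym a (r + 1))) ++
      [[powSym a r, powSym a r]] = roundGrammar a b (r + 1) W := by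
  have hstart : replaceNO [powSym a r, powSym a r] (powSym a (r + 1)) (startRule a b r W) =
      startRule a b (r + 1) W := by
    rw [startRule, replaceNO_intercalate_singleton (List.cons_ne_nil _ _) _
      (by simp [(powSym_ne_inr hab r).symm]), List.map_map, startRule]
    exact congrArg _ (List.map_congr_left fun l hl => replaceNO_blockCode a (hW l hl))
  have hrules : ∀ j ∈ List.range r, replaceNO [powSym a r, powSym a r] (powSym a (r + 1))
      [powSym a j, powSym a j] = [powSym a j, powSym a j] := by
    intro j hj
    refine replaceNO_eq_self_of_not_isInfix (fun h => ?_) _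
    have hmem : powSym a r ∈ [powSym a j, powSym a j] := h.subset List.mem_cons_self
    have hrj : r = j := powSym_injective a (by simpa using hmem)
    exact (List.mem_range.1 hj).ne' hrj
  rw [roundGrammar, List.map_cons, hstart, List.map_map, roundGrammar, List.range_succ,
    List.map_append, List.cons_append]
  exact congrArg (_ :: · ++ _) (List.map_congr_left hrules)

theorem sum_half_le_freq_pair (hab : a ≠ b) :
    (W.map fun l => binVal (l.rdrop r) / 2).sum ≤
      freq (roundGrammar a b r W) [powSym a r, powSym a r] := by
  rw [freq, roundGrammar, List.map_cons, List.sum_cons, startRule,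
    countNO_intercalate_singleton (List.cons_ne_nil _ _) (by simp [(powSym_ne_inr hab r).symm]),
    List.map_map]
  refine Nat.le_add_right_of_le (le_of_eq (congrArg _ (List.map_congr_left fun l _ => ?_)))
  exact (countNO_pair_replicate_append (powSym_notMem_bitWord_rtake a r l) _).symm

theorem countP_eq_flatten_roundGrammar_le (hab : a ≠ b) {c : RSym α} (hc : c ≠ powSym a r) :
    (roundGrammar a b r W).flatten.countP (fun d => d = c) ≤ W.length + 2 := by
  have hblock : ∀ l, (blockCode a r l ++ [Sum.inr b]).countP (fun d => d = c) ≤ 1 := by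
    intro l
    have hnodup : (bitWord a (l.rtake r) ++ [Sum.inr b]).Nodup := by
      refine (nodup_bitWord a _).append (List.nodup_singleton _) (List.disjoint_singleton.2 ?_)
      rintro hb
      obtain ⟨j, -, hj⟩ := List.mem_map.1 hb
      exact powSym_ne_inr hab j hj
    rw [blockCode, List.append_assoc, List.countP_append, List.countP_replicate,
      if_neg (by simpa using hc.symm), zero_add]
    exact countP_eq_le_one_of_nodup hnodup c
  have hstart : (startRule a b r W).countP (fun d => d = c) ≤ W.length := by
    refine (countP_intercalate_singleton_le _ _ _).trans ?_
    rw [List.map_map]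
    refine (List.sum_le_card_nsmul _ 1 fun n hn => ?_).trans (by simp)
    obtain ⟨l, -, rfl⟩ := List.mem_map.1 hn
    exact hblock l
  have hrules : ((List.range r).map (powSym a)).countP (fun d => d = c) ≤ 1 :=
    countP_eq_le_one_of_nodup (List.nodup_range.map (powSym_injective a)) c
  rw [roundGrammar, List.flatten_cons, List.countP_append, countP_flatten_map_pair]
  omega

theorem countP_eq_powSym_flatten_roundGrammar_le (hab : a ≠ b) :
    (roundGrammar a b r W).flatten.countP (fun d => d = powSym a r) ≤
      (W.map fun l => binVal (l.rdrop r)).sum := by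
  have hrules : ((List.range r).map (powSym a)).countP (fun d => d = powSym a r) = 0 := by
    rw [List.countP_eq_zero]
    rintro d hd
    obtain ⟨j, hj, rfl⟩ := List.mem_map.1 hd
    simpa [(powSym_injective a).eq_iff] using (List.mem_range.1 hj).ne
  rw [roundGrammar, List.flatten_cons, List.countP_append, countP_flatten_map_pair, hrules]
  refine (countP_intercalate_singleton_le _ _ _).trans (le_of_eq ?_)
  rw [List.map_map]
  refine congrArg _ (List.map_congr_left fun l _ => ?_)
  have hbits : (bitWord a (l.rtake r)).countP (fun d => d = powSym a r) = 0 := by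
    rw [List.countP_eq_zero]
    rintro d hd hdr
    exact powSym_notMem_bitWord_rtake a r l (of_decide_eq_true hdr ▸ hd)
  simp [blockCode, List.countP_replicate, hbits, (powSym_ne_inr hab r).symm]

theorem freq_roundGrammar_le_of_mem (hab : a ≠ b) {c : RSym α} (hc : c ≠ powSym a r)
    {δ : List (RSym α)} (hcδ : c ∈ δ) : freq (roundGrammar a b r W) δ ≤ W.length + 2 := by
  have hpos : 0 < δ.countP fun d => d = c := List.countP_pos_iff.2 ⟨c, hcδ, decide_eq_true rfl⟩
  calc freq (roundGrammar a b r W) δ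
      ≤ freq (roundGrammar a b r W) δ * δ.countP (fun d => d = c) :=
        Nat.le_mul_of_pos_right _ hpos
    _ ≤ (roundGrammar a b r W).flatten.countP (fun d => d = c) :=
        freq_mul_countP_le (List.ne_nil_of_mem hcδ) _ _
    _ ≤ W.length + 2 := countP_eq_flatten_roundGrammar_le hab hc

theorem freq_roundGrammar_replicate_mul_le (hab : a ≠ b) {m : ℕ} (hm : m ≠ 0) :
    freq (roundGrammar a b r W) (List.replicate m (powSym a r)) * m ≤
      (W.map fun l => binVal (l.rdrop r)).sum := by
  have h := freq_mul_countP_le (γ := List.replicate m (powSym a r)) (by simpa using hm)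
    (fun d => d = powSym a r) (roundGrammar a b r W)
  rw [List.countP_replicate, if_pos (by simp)] at h
  exact h.trans (countP_eq_powSym_flatten_roundGrammar_le hab)

theorem sum_half_bounds {ι : Type*} {q : ι → ℕ} {l : List ι} (hq : ∀ i ∈ l, 4 ≤ q i) :
    2 * l.length ≤ (l.map fun i => q i / 2).sum ∧
      (l.map q).sum + l.length ≤ 3 * (l.map fun i => q i / 2).sum := by
  induction l with
  | nil => simp
  | cons i l ih =>
    obtain ⟨hi, hl⟩ := List.forall_mem_cons.1 hq
    have := ih hl
    simp only [List.map_cons, List.sum_cons, List.length_cons]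
    omega

-- A word containing a letter other than `X_r` occurs at most `|W| + 2` times and a longer power of
-- `X_r` at most a third of its total exponent, while `X_r X_r` takes half of each block exponent.
theorem freq_roundGrammar_lt_freq_pair (hab : a ≠ b) (hlen : 3 ≤ W.length)
    (hW : ∀ l ∈ W, 4 ≤ binVal (l.rdrop r)) {δ : List (RSym α)} (hδ : 2 ≤ δ.length)
    (hne : δ ≠ [powSym a r, powSym a r]) :
    freq (roundGrammar a b r W) δ < freq (roundGrammar a b r W) [powSym a r, powSym a r] := by
  obtain ⟨htwo, hthree⟩ := sum_half_bounds hW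
  have hpair := sum_half_le_freq_pair (r := r) (W := W) hab
  by_cases hc : ∀ c ∈ δ, c = powSym a r
  · obtain ⟨m, rfl⟩ : ∃ m, δ = List.replicate m (powSym a r) :=
      ⟨_, List.eq_replicate_iff.2 ⟨rfl, hc⟩⟩
    rw [List.length_replicate] at hδ
    have hm : 3 ≤ m := by
      refine lt_of_le_of_ne hδ ?_
      rintro rfl
      exact hne rfl
    have hmul := freq_roundGrammar_replicate_mul_le (r := r) (W := W) hab (by omega : m ≠ 0)
    have := Nat.mul_le_mul_left (freq (roundGrammar a b r W) (List.replicate m (powSym a r))) hm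
    omega
  · push Not at hc
    obtain ⟨c, hcδ, hc⟩ := hc
    have := freq_roundGrammar_le_of_mem (W := W) hab hc hcδ
    omega

theorem RePairStep.eq_roundGrammar (hab : a ≠ b) (hlen : 3 ≤ W.length)
    (hW : ∀ l ∈ W, r < l.length ∧ 4 ≤ binVal (l.rdrop r)) {G : Grammar α}
    (hG : RePairStep (roundGrammar a b r W) G) : G = roundGrammar a b (r + 1) W := by
  have hfour : ∀ l ∈ W, 4 ≤ binVal (l.rdrop r) := fun l hl => (hW l hl).2
  have hfreq : 2 ≤ freq (roundGrammar a b r W) [powSym a r, powSym a r] := by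
    have := (sum_half_bounds hfour).1
    have := sum_half_le_freq_pair (r := r) (W := W) hab
    omega
  rw [hG.eq_of_forall_freq_lt rfl hfreq fun δ => freq_roundGrammar_lt_freq_pair hab hlen hfour,
    ← map_replaceNO_roundGrammar hab fun l hl => (hW l hl).1]
  simp [roundGrammar, powSym]

theorem RePairSteps.eq_roundGrammar (hab : a ≠ b) (hlen : 3 ≤ W.length)
    (hhead : ∀ l ∈ W, l.head? = some true) {n : ℕ} (hn : ∀ l ∈ W, n + 2 ≤ l.length)
    {G : Grammar α} (hG : RePairSteps n (roundGrammar a b 0 W) G) : G = roundGrammar a b n W := by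
  generalize hG₀ : roundGrammar a b 0 W = G₀ at hG
  induction hG with
  | refl => exact hG₀.symm
  | tail _ hstep ih =>
    obtain rfl := ih (fun l hl => (Nat.le_succ _).trans (hn l hl)) hG₀
    refine hstep.eq_roundGrammar hab hlen fun l hl => ?_
    have := hn l hl
    exact ⟨by omega, four_le_binVal_rdrop (hhead l hl) (by omega)⟩

end Rounds

section Intercalate

variable {σ : Type*}

theorem flatMap_append_intercalate_cons (s : List σ) (L₁ : List (List σ)) (u : List σ)
    (L₂ : List (List σ)) :
    L₁.flatMap (· ++ s) ++ s.intercalate (u :: L₂) = s.intercalate (L₁ ++ u :: L₂) := by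
  induction L₁ with
  | nil => rfl
  | cons t L₁ ih =>
    rw [List.cons_append, List.intercalate_cons_of_ne_nil (zs := L₁ ++ u :: L₂) (by simp), ← ih,
      List.flatMap_cons, List.append_assoc]

theorem flatMap_append_prefix_intercalate (s : List σ) (f : ℕ → List σ) {i n : ℕ} (hi : i < n) :
    (List.range i).flatMap (fun j => f j ++ s) ++ f i <+:
      s.intercalate ((List.range n).map f) := by
  obtain ⟨m, rfl⟩ := Nat.exists_eq_add_of_lt hi
  rw [add_assoc, List.range_add, List.range_succ_eq_map, List.map_append, List.map_cons,
    List.map_cons, ← flatMap_append_intercalate_cons, List.flatMap_map, add_zero,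
    List.prefix_append_right_inj]
  cases (List.map Nat.succ (List.range m)).map (i + ·) |>.map f with
  | nil => simp
  | cons t L => rw [List.intercalate_cons_cons, List.append_assoc]; exact List.prefix_append _ _

theorem exists_pos_factors_intercalate (s : List σ) {n : ℕ} {f v : ℕ → List σ}
    (hv : ∀ i < n, v i <:+: f i) :
    ∃ pos : ℕ → ℕ, (∀ i < n, v i <+: (s.intercalate ((List.range n).map f)).drop (pos i)) ∧
      ∀ i j, i < j → j < n → pos i + (v i).length ≤ pos j := by
  choose! l r hlr using hv
  set start : ℕ → ℕ := fun i => ((List.range i).flatMap fun j => f j ++ s).length with hstart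
  have start_succ : ∀ i, start i + (f i).length ≤ start (i + 1) := by
    intro i
    simp only [hstart, List.range_succ, List.flatMap_append, List.flatMap_singleton,
      List.length_append]
    omega
  have start_mono : Monotone start := monotone_nat_of_le_succ fun i => by
    have := start_succ i
    omega
  refine ⟨fun i => start i + (l i).length, fun i hi => ?_, fun i j hij hj => ?_⟩
  · obtain ⟨t, ht⟩ := flatMap_append_prefix_intercalate s f hi
    rw [← ht, ← hlr i hi, ← List.drop_drop, List.append_assoc, List.drop_left, List.append_assoc,
      List.append_assoc, List.drop_left]
    exact List.prefix_append _ _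
  · have hlen := congrArg List.length (hlr i (hij.trans hj))
    simp only [List.length_append] at hlen
    have := start_succ i
    have := start_mono (Nat.succ_le_of_lt hij)
    dsimp only [Nat.succ_eq_add_one] at this ⊢
    omega

end Intercalate

section FactorWords

variable {w : List Bool} {k : ℕ}

theorem RePairInit_blockWord (l : ℕ → List Bool) (hk : k ≠ 0) :
    RePairInit (blockWord (fun i => binVal (l i)) k) =
      roundGrammar 0 1 0 ((List.range k).map fun j => l (j + 1)) := by
  obtain ⟨n, rfl⟩ := Nat.exists_eq_succ_of_ne_zero hk
  have hcode : ∀ u : List Bool, blockCode (0 : Fin 2) 0 u = List.replicate (binVal u) (Sum.inr 0) :=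
    fun u => by simp [blockCode, bitWord, oneExponents, powSym]
  rw [RePairInit, blockWord, roundGrammar, startRule, List.range_zero, List.map_nil, List.map_map,
    List.range_succ, List.map_append (l₁ := List.range n), List.map_singleton,
    ← flatMap_append_intercalate_cons, List.intercalate_singleton, List.flatMap_map,
    List.map_append, List.map_flatMap]
  simp [hcode]

theorem sum_countOcc_factorWord_le_one {n : ℕ} (hw : FactorsDistinct n w)
    (hlen : 2 * k ≤ w.length) {x : List (RSym (Fin 2))} (hne : x ≠ []) (hn : n ≤ x.length) :
    ∑ i ∈ Finset.Icc 1 k, countOcc x (factorWord w k i) ≤ 1 := by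
  refine sum_countOcc_le_one fun i hi j hj p q hp hq => ?_
  rw [Finset.mem_Icc] at hi hj
  rw [factorWord_eq_bitWord (by omega)] at hp hq
  have hij : i + 1 = j + 1 := eq_of_common_factor_bitWord hw (by omega) (by omega) hne hn
    (hp.isInfix.trans (List.drop_suffix p _).isInfix)
    (hq.isInfix.trans (List.drop_suffix q _).isInfix)
  obtain rfl := Nat.succ_injective hij
  exact ⟨rfl, eq_of_nodup_of_prefix_drop (nodup_bitWord 0 _) hne hp hq⟩

theorem factorWord_isInfix_blockCode {i : ℕ} (hk : k ≠ 0) (hlen : k + i ≤ w.length) :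
    factorWord w k i <:+: blockCode 0 (k - 1) (w.take (k + i)) := by
  have hrtake : (w.take (k + i)).rtake (k - 1) = (w.drop (i + 1)).take (k - 1) := by
    rw [List.rtake, List.length_take, min_eq_left hlen,
      show k + i - (k - 1) = i + 1 by omega, List.drop_take, show k + i - (i + 1) = k - 1 by omega]
  rw [factorWord_eq_bitWord hlen, blockCode, hrtake]
  exact (List.suffix_append _ _).isInfix

theorem exists_pos_factorWord (hk : 3 ≤ k) (hlen : 2 * k ≤ w.length) (hhead : w.head? = some true)
    {G : Grammar (Fin 2)}
    (hG : RePairSteps (k - 1)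
      (RePairInit (blockWord (fun i => binVal (w.take (k + i))) k)) G) :
    ∃ pos : ℕ → ℕ,
      (∀ i, 1 ≤ i → i ≤ k →
        (G.headI.drop (pos i)).take (factorWord w k i).length = factorWord w k i) ∧
      (∀ i j, 1 ≤ i → i < j → j ≤ k → pos i + (factorWord w k i).length ≤ pos j) := by
  rw [RePairInit_blockWord _ (by omega)] at hG
  have hblock : ∀ l ∈ (List.range k).map fun j => w.take (k + (j + 1)),
      l.head? = some true ∧ k - 1 + 2 ≤ l.length := by
    intro l hl
    obtain ⟨j, hj, rfl⟩ := List.mem_map.1 hl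
    rw [List.mem_range] at hj
    rw [List.head?_take, if_neg (by omega), List.length_take]
    exact ⟨hhead, by omega⟩
  obtain rfl := hG.eq_roundGrammar (by decide) (by simpa using hk)
    (fun l hl => (hblock l hl).1) fun l hl => (hblock l hl).2
  obtain ⟨pos, hpos, hdisjoint⟩ := exists_pos_factors_intercalate [Sum.inr 1] (n := k)
    (f := fun j => blockCode 0 (k - 1) (w.take (k + (j + 1))))
    (v := fun j => factorWord w k (j + 1))
    fun j hj => factorWord_isInfix_blockCode (by omega) (by omega)
  refine ⟨fun i => pos (i - 1), fun i h1 hi => ?_, fun i j h1 hij hj => ?_⟩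
  · have hpre := hpos (i - 1) (by omega)
    rw [Nat.sub_add_cancel h1] at hpre
    rw [roundGrammar, List.headI_cons, startRule, List.map_map]
    exact (List.prefix_iff_eq_take.1 hpre).symm
  · simpa only [Nat.sub_add_cancel h1] using hdisjoint (i - 1) (j - 1) (by omega) (by omega)

end FactorWords

theorem repair_stmt_19_general {k c : ℕ} (hk : 3 ≤ k) {B : List Bool} (hkB : k ≤ B.length)
    (hBhead : B.headI = true) (hB : ∀ x : List Bool, x.length = c → countOcc x B ≤ 1) :
    (∀ i, 1 ≤ i → i ≤ k →
      (factorWord (hmap (B.take k)) k i).Nodup ∧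
      k - 3 ≤ 2 * (factorWord (hmap (B.take k)) k i).length) ∧
    (∀ x : List (RSym (Fin 2)), 2 * c ≤ x.length →
      (∑ i ∈ Finset.Icc 1 k, countOcc x (factorWord (hmap (B.take k)) k i)) ≤ 1) ∧
    (∀ G : Grammar (Fin 2),
      RePairSteps (k - 1)
        (RePairInit (blockWord (fun i => binVal ((hmap (B.take k)).take (k + i))) k)) G →
      ∃ pos : ℕ → ℕ,
        (∀ i, 1 ≤ i → i ≤ k →
          (G.headI.drop (pos i)).take (factorWord (hmap (B.take k)) k i).length =
            factorWord (hmap (B.take k)) k i) ∧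
        (∀ i j, 1 ≤ i → i < j → j ≤ k →
          pos i + (factorWord (hmap (B.take k)) k i).length ≤ pos j)) := by
  have hlen : (hmap (B.take k)).length = 2 * k := by
    rw [length_hmap, List.length_take, min_eq_left hkB]
  have hhead : (hmap (B.take k)).head? = some true := by
    rw [head?_hmap, List.head?_take, if_neg (by omega)]
    cases B with
    | nil => cases hBhead
    | cons d B => exact congrArg some hBhead
  have hdistinct : FactorsDistinct c (B.take k) := (FactorsDistinct.of_countOcc_le_one hB).take k
  have hc : 0 < c := hdistinct.pos (List.ne_nil_of_length_pos (by rw [List.length_take]; omega))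
  refine ⟨fun i _ hi => ?_, fun x hx => ?_, fun G hG => exists_pos_factorWord hk hlen.ge hhead hG⟩
  · rw [factorWord_eq_bitWord (by omega), length_bitWord]
    have hcount := le_two_mul_count_true_hmap_window (B.take k) (p := i + 1) (m := k - 1)
      (by rw [← length_hmap, hlen]; omega)
    exact ⟨nodup_bitWord 0 _, by omega⟩
  · exact sum_countOcc_factorWord_le_one hdistinct.hmap hlen.ge
      (List.length_pos_iff.1 (by omega)) hx

/-- For `s_k` built from `w = h(B[1:k])` (`B` a De Bruijn sequence of order `⌈log₂ k⌉`
starting with `1`), the start rule after `k - 1` rounds of RePair contains `k` pairwise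
non-overlapping factors `v i = f (k-2) (w[i+2]) ⋯ f 1 (w[k+i-1]) f 0 (w[k+i])`
(with `f 0 1 = a`, `f j 1 = X j`, `f j 0 = ε`); each `v i` has length `≥ (k-3)/2`, no
letter occurs twice in any `v i`, and every word of length `2⌈log₂ k⌉ + 2` occurs at
most once among the factors of the `v i`. -/
theorem repair_stmt_19 (k : ℕ) (hk : 4 ≤ k) (B : List Bool)
    (hBlen : B.length = 2 ^ Nat.clog 2 k) (hBhead : B.headI = true)
    (hB : ∀ x : List Bool, x.length = Nat.clog 2 k → countOcc x B ≤ 1) :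
    (∀ i, 1 ≤ i → i ≤ k →
      ((List.range (k - 1)).flatMap (fun j =>
        if (hmap (B.take k)).getD (i + 1 + j) false then
          [if k - 2 - j = 0 then (Sum.inr 0 : RSym (Fin 2)) else Sum.inl (k - 2 - j)]
        else [])).Nodup ∧
      k - 3 ≤ 2 * ((List.range (k - 1)).flatMap (fun j =>
        if (hmap (B.take k)).getD (i + 1 + j) false then
          [if k - 2 - j = 0 then (Sum.inr 0 : RSym (Fin 2)) else Sum.inl (k - 2 - j)]
        else [])).length) ∧
    (∀ x : List (RSym (Fin 2)), x.length = 2 * Nat.clog 2 k + 2 →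
      (∑ i ∈ Finset.Icc 1 k, countOcc x ((List.range (k - 1)).flatMap (fun j =>
        if (hmap (B.take k)).getD (i + 1 + j) false then
          [if k - 2 - j = 0 then (Sum.inr 0 : RSym (Fin 2)) else Sum.inl (k - 2 - j)]
        else []))) ≤ 1) ∧
    (∀ G : Grammar (Fin 2),
      RePairSteps (k - 1)
        (RePairInit (blockWord (fun i => binVal ((hmap (B.take k)).take (k + i))) k)) G →
      ∃ pos : ℕ → ℕ,
        (∀ i, 1 ≤ i → i ≤ k →
          (G.headI.drop (pos i)).take ((List.range (k - 1)).flatMap (fun j =>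
            if (hmap (B.take k)).getD (i + 1 + j) false then
              [if k - 2 - j = 0 then (Sum.inr 0 : RSym (Fin 2)) else Sum.inl (k - 2 - j)]
            else [])).length =
          (List.range (k - 1)).flatMap (fun j =>
            if (hmap (B.take k)).getD (i + 1 + j) false then
              [if k - 2 - j = 0 then (Sum.inr 0 : RSym (Fin 2)) else Sum.inl (k - 2 - j)]
            else [])) ∧
        (∀ i j, 1 ≤ i → i < j → j ≤ k →
          pos i + ((List.range (k - 1)).flatMap (fun j' =>
            if (hmap (B.take k)).getD (i + 1 + j') false then
              [if k - 2 - j' = 0 then (Sum.inr 0 : RSym (Fin 2)) else Sum.inl (k - 2 - j')]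
            else [])).length ≤ pos j)) := by
  obtain ⟨hfactor, hocc, hpos⟩ :=
    repair_stmt_19_general (by omega) (hBlen ▸ Nat.le_pow_clog one_lt_two k) hBhead hB
  exact ⟨hfactor, fun x hx => hocc x (by omega), hpos⟩
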